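/- arXiv:1702.04168 — 2 statements merged into one kernel-verified Lean document; each statement's English description precedes it below -/
import Mathlib

section
/- Evolution of the spatial Fisher information under the relaxation collision operator: if h : [0,∞) × 𝕋^d × ℝ^d → ℝ is smooth, bounded above and below by positive constants, has all partial derivatives bounded, and solves ∂_t h = λ(Πh − h) with λ > 0, then for all t ≥ 0: (d/dt) I^X(h_t) ≤ −λ I^{ΠX/X}(h_t) − λ ( I^X(h_t) − I^{ΠX}(h_t) ). -/
/-!
The inequality is in fact an equality, and it holds pointwise before integration. Write `P = Πh`.
Differentiating `|∇h|²/h` in time and inserting `∂ₜh = λ(P - h)`, `∂ₜ∇h = λ(∇P - ∇h)` gives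
`λ (2 ∇h·∇P/h - |∇h|²/h - P|∇h|²/h²)`, while expanding the square in the integrand of `I^{ΠX/X}`
gives `|∇P|²/P - 2 ∇h·∇P/h + P|∇h|²/h²`. Hence
`∂ₜ(|∇h|²/h) = -λ (integrand of I^{ΠX/X}) - λ |∇h|²/h + λ |∇P|²/P` (`pointwise_identity`), and the
last term integrates to `λ I^{ΠX}` because `gauss` has total mass one (`integral_gauss`).

The time derivative passes under the integral by domination (`hasDerivAt_intMu`): the derivative of
the integrand is bounded uniformly, since `h` is bounded below and its first and second derivatives are
bounded. Differentiability of `P` in `x` needs no differentiation under the integral: the equation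
itself says `P = h + λ⁻¹ ∂ₜh` at the given time, for any `v`, so `∇P = ∇h + λ⁻¹ ∇∂ₜh`, and symmetry
of second derivatives turns this into the formula for `∂ₜ∇h`. In particular the equation is only
used at the single time `t`, which makes the two-sided derivative at `t = 0` unproblematic.
-/

open MeasureTheory Real Filter

noncomputable section

/-- The standard Gaussian density `ℳ(v) = (2π)^{-d/2} exp(-|v|²/2)` on `ℝ^d`. -/
def gauss (d : ℕ) (v : Fin d → ℝ) : ℝ :=
  (2 * Real.pi) ^ (-(d : ℝ) / 2) * Real.exp (-(∑ i, v i ^ 2) / 2)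

/-- Fundamental domain `[0,1]^d` of the torus `𝕋^d`; the normalized Lebesgue measure on
the torus is the restriction of Lebesgue measure to this cube. -/
def cube (d : ℕ) : Set (Fin d → ℝ) := Set.Icc 0 1

/-- A function of `(x,v)` represents a function on `𝕋^d × ℝ^d` iff it is `ℤ^d`-periodic in `x`. -/
def IsPeriodic (d : ℕ) (f : (Fin d → ℝ) → (Fin d → ℝ) → ℝ) : Prop :=
  ∀ (x v : Fin d → ℝ) (k : Fin d → ℤ), f (x + fun i => (k i : ℝ)) v = f x v

/-- The projection `Πf(x) = ∫ f(x,u) ℳ(u) du`. -/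
def proj (d : ℕ) (f : (Fin d → ℝ) → (Fin d → ℝ) → ℝ) (x : Fin d → ℝ) : ℝ :=
  ∫ u, f x u * gauss d u

/-- Euclidean dot product on `ℝ^d`. -/
def dotp (d : ℕ) (a b : Fin d → ℝ) : ℝ := ∑ i, a i * b i

/-- Squared Euclidean norm on `ℝ^d`. -/
def nsq (d : ℕ) (a : Fin d → ℝ) : ℝ := ∑ i, a i ^ 2

/-- Gradient in the `x` variable. -/
def gradx (d : ℕ) (f : (Fin d → ℝ) → (Fin d → ℝ) → ℝ) (x v : Fin d → ℝ) : Fin d → ℝ :=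
  fun i => fderiv ℝ (fun y => f y v) x (Pi.single i 1)

/-- Gradient in the `v` variable. -/
def gradv (d : ℕ) (f : (Fin d → ℝ) → (Fin d → ℝ) → ℝ) (x v : Fin d → ℝ) : Fin d → ℝ :=
  fun i => fderiv ℝ (fun w => f x w) v (Pi.single i 1)

/-- Gradient of a function of `x` only. -/
def grad1 (d : ℕ) (g : (Fin d → ℝ) → ℝ) (x : Fin d → ℝ) : Fin d → ℝ :=
  fun i => fderiv ℝ g x (Pi.single i 1)

/-- Laplacian in the `v` variable. -/
def lapv (d : ℕ) (f : (Fin d → ℝ) → (Fin d → ℝ) → ℝ) (x v : Fin d → ℝ) : ℝ :=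
  ∑ i, fderiv ℝ (fun w => gradv d f x w i) v (Pi.single i 1)

/-- Integral against `μ = ℳ(v) dv dx` on `𝕋^d × ℝ^d`. -/
def intMu (d : ℕ) (F : (Fin d → ℝ) → (Fin d → ℝ) → ℝ) : ℝ :=
  ∫ x in cube d, ∫ v, F x v * gauss d v

/-- `I^X(h) = ∫ |∇_x h|²/h dμ`. -/
def IX (d : ℕ) (h : (Fin d → ℝ) → (Fin d → ℝ) → ℝ) : ℝ :=
  intMu d fun x v => nsq d (gradx d h x v) / h x v

/-- `I^V(h) = ∫ |∇_v h|²/h dμ`. -/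
def IV (d : ℕ) (h : (Fin d → ℝ) → (Fin d → ℝ) → ℝ) : ℝ :=
  intMu d fun x v => nsq d (gradv d h x v) / h x v

/-- `I^M(h) = ∫ (∇_x h · ∇_v h)/h dμ`. -/
def IM (d : ℕ) (h : (Fin d → ℝ) → (Fin d → ℝ) → ℝ) : ℝ :=
  intMu d fun x v => dotp d (gradx d h x v) (gradv d h x v) / h x v

/-- The full Fisher information `I(h) = ∫ |∇_{x,v} h|²/h dμ`. -/
def Ifull (d : ℕ) (h : (Fin d → ℝ) → (Fin d → ℝ) → ℝ) : ℝ :=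
  intMu d fun x v => (nsq d (gradx d h x v) + nsq d (gradv d h x v)) / h x v

/-- `I^{ΠX}(h) = ∫_{𝕋^d} |∇_x Πh|²/Πh dx`. -/
def IPiX (d : ℕ) (h : (Fin d → ℝ) → (Fin d → ℝ) → ℝ) : ℝ :=
  ∫ x in cube d, nsq d (grad1 d (proj d h) x) / proj d h x

/-- `I^{ΠX/X}(h) = ∫ (|∇_x(Πh/h)|²/(Πh/h)) h dμ`. -/
def IPiXX (d : ℕ) (h : (Fin d → ℝ) → (Fin d → ℝ) → ℝ) : ℝ :=
  intMu d fun x v =>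
    nsq d (gradx d (fun y w => proj d h y / h y w) x v) / (proj d h x / h x v) * h x v

/-- `I^{ΠV/V}(h) = ∫ (|∇_v h|²/h)(Πh/h) dμ`. -/
def IPiVV (d : ℕ) (h : (Fin d → ℝ) → (Fin d → ℝ) → ℝ) : ℝ :=
  intMu d fun x v => nsq d (gradv d h x v) / h x v * (proj d h x / h x v)

/-- The relative entropy `H(h) = ∫ h log h dμ`. -/
def Hent (d : ℕ) (h : (Fin d → ℝ) → (Fin d → ℝ) → ℝ) : ℝ :=
  intMu d fun x v => h x v * Real.log (h x v)

/-- The projected entropy `H_Π(h) = ∫_{𝕋^d} Πh log Πh dx`. -/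
def HPi (d : ℕ) (h : (Fin d → ℝ) → (Fin d → ℝ) → ℝ) : ℝ :=
  ∫ x in cube d, proj d h x * Real.log (proj d h x)

/-- The local average speed `U(x) = ∫ v h(x,v) ℳ(v) dv`. -/
def Uvec (d : ℕ) (h : (Fin d → ℝ) → (Fin d → ℝ) → ℝ) (x : Fin d → ℝ) : Fin d → ℝ :=
  fun i => ∫ v, v i * h x v * gauss d v

/-- The divergence `∇_x · U`. -/
def divU (d : ℕ) (h : (Fin d → ℝ) → (Fin d → ℝ) → ℝ) (x : Fin d → ℝ) : ℝ :=
  ∑ i, fderiv ℝ (fun y => Uvec d h y i) x (Pi.single i 1)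

/-- The `p`-entropy `H^{(p)}(h) = ∫ (h^p - h)/(p(p-1)) dμ`. -/
def Hp (d : ℕ) (p : ℝ) (h : (Fin d → ℝ) → (Fin d → ℝ) → ℝ) : ℝ :=
  intMu d fun x v => (h x v ^ p - h x v) / (p * (p - 1))

/-- The projected `p`-entropy `H_Π^{(p)}(h) = ∫_{𝕋^d} ((Πh)^p - Πh)/(p(p-1)) dx`. -/
def HpPi (d : ℕ) (p : ℝ) (h : (Fin d → ℝ) → (Fin d → ℝ) → ℝ) : ℝ :=
  ∫ x in cube d, ((proj d h x) ^ p - proj d h x) / (p * (p - 1))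

/-- The `p`-Fisher information `I^{(p)}(h) = ∫ h^{p-2} |∇_{x,v} h|² dμ`. -/
def Ipfull (d : ℕ) (p : ℝ) (h : (Fin d → ℝ) → (Fin d → ℝ) → ℝ) : ℝ :=
  intMu d fun x v => h x v ^ (p - 2) * (nsq d (gradx d h x v) + nsq d (gradv d h x v))

/-- The spatial `p`-Fisher information `∫ h^{p-2} |∇_x h|² dμ`. -/
def IpX (d : ℕ) (p : ℝ) (h : (Fin d → ℝ) → (Fin d → ℝ) → ℝ) : ℝ :=
  intMu d fun x v => h x v ^ (p - 2) * nsq d (gradx d h x v)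

/-- Regularity of a time-dependent `h`: smooth, periodic in `x`, bounded above and below by
positive constants, with all partial derivatives bounded. -/
def Regular (d : ℕ) (h : ℝ → (Fin d → ℝ) → (Fin d → ℝ) → ℝ) : Prop :=
  ContDiff ℝ (⊤ : ℕ∞) (fun q : ℝ × (Fin d → ℝ) × (Fin d → ℝ) => h q.1 q.2.1 q.2.2) ∧
  (∀ t, IsPeriodic d (h t)) ∧
  (∃ c C : ℝ, 0 < c ∧ ∀ t x v, c ≤ h t x v ∧ h t x v ≤ C) ∧
  (∀ n : ℕ, ∃ C : ℝ, ∀ q : ℝ × (Fin d → ℝ) × (Fin d → ℝ),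
    ‖iteratedFDeriv ℝ n (fun r : ℝ × (Fin d → ℝ) × (Fin d → ℝ) => h r.1 r.2.1 r.2.2) q‖ ≤ C)

/-- Regularity of a time-independent `h`: smooth, periodic in `x`, bounded above and below by
positive constants, with bounded gradient. -/
def RegularStatic (d : ℕ) (h : (Fin d → ℝ) → (Fin d → ℝ) → ℝ) : Prop :=
  ContDiff ℝ (⊤ : ℕ∞) (fun q : (Fin d → ℝ) × (Fin d → ℝ) => h q.1 q.2) ∧
  IsPeriodic d h ∧
  (∃ c C : ℝ, 0 < c ∧ ∀ x v, c ≤ h x v ∧ h x v ≤ C) ∧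
  (∃ C : ℝ, ∀ q : (Fin d → ℝ) × (Fin d → ℝ),
    ‖fderiv ℝ (fun r : (Fin d → ℝ) × (Fin d → ℝ) => h r.1 r.2) q‖ ≤ C)

/-- `h` solves the linear relaxation Boltzmann equation `∂_t h + v·∇_x h = λ(Πh - h)` for `t ≥ 0`. -/
def SolvesLRB (d : ℕ) (lam : ℝ) (h : ℝ → (Fin d → ℝ) → (Fin d → ℝ) → ℝ) : Prop :=
  ∀ t x v, 0 ≤ t →
    deriv (fun s => h s x v) t + dotp d v (gradx d (h t) x v)
      = lam * (proj d (h t) x - h t x v)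

/-- `h` solves the free transport equation `∂_t h + v·∇_x h = 0` for `t ≥ 0`. -/
def SolvesTransport (d : ℕ) (h : ℝ → (Fin d → ℝ) → (Fin d → ℝ) → ℝ) : Prop :=
  ∀ t x v, 0 ≤ t →
    deriv (fun s => h s x v) t + dotp d v (gradx d (h t) x v) = 0

/-- `h` solves the pure relaxation equation `∂_t h = λ(Πh - h)` for `t ≥ 0`. -/
def SolvesCollision (d : ℕ) (lam : ℝ) (h : ℝ → (Fin d → ℝ) → (Fin d → ℝ) → ℝ) : Prop :=
  ∀ t x v, 0 ≤ t →
    deriv (fun s => h s x v) t = lam * (proj d (h t) x - h t x v)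

/-- `h` solves the kinetic Fokker–Planck equation `∂_t h + v·∇_x h = Δ_v h - v·∇_v h` for `t ≥ 0`. -/
def SolvesKFP (d : ℕ) (h : ℝ → (Fin d → ℝ) → (Fin d → ℝ) → ℝ) : Prop :=
  ∀ t x v, 0 ≤ t →
    deriv (fun s => h s x v) t + dotp d v (gradx d (h t) x v)
      = lapv d (h t) x v - dotp d v (gradv d (h t) x v)

/-! ### Integration against the Gaussian measure -/

lemma gauss_eq_prod (d : ℕ) (v : Fin d → ℝ) :
    gauss d v = (2 * Real.pi) ^ (-(d : ℝ) / 2) * ∏ i, Real.exp (-(1 / 2) * v i ^ 2) := by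
  unfold gauss
  rw [← Real.exp_sum, ← Finset.mul_sum]
  congr 2
  ring

lemma gauss_nonneg (d : ℕ) (v : Fin d → ℝ) : 0 ≤ gauss d v := by
  unfold gauss
  positivity

lemma integrable_gauss (d : ℕ) : Integrable (gauss d) := by
  have e : gauss d = fun v => (2 * Real.pi) ^ (-(d : ℝ) / 2) *
      ∏ i, Real.exp (-(1 / 2) * v i ^ 2) := funext (gauss_eq_prod d)
  rw [e]
  refine Integrable.const_mul ?_ _
  exact Integrable.fintype_prod (f := fun _ (x : ℝ) => Real.exp (-(1 / 2) * x ^ 2))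
    (fun _ => integrable_exp_neg_mul_sq (by norm_num))

lemma integral_gauss (d : ℕ) : ∫ v, gauss d v = 1 := by
  simp_rw [gauss_eq_prod]
  rw [integral_const_mul,
    integral_fintype_prod_volume_eq_prod (f := fun _ (x : ℝ) => Real.exp (-(1 / 2) * x ^ 2))]
  simp only [integral_gaussian, Finset.prod_const, Finset.card_univ, Fintype.card_fin]
  have hp : (0 : ℝ) < 2 * Real.pi := by positivity
  rw [show Real.pi / (1 / 2) = 2 * Real.pi by ring, Real.sqrt_eq_rpow, ← Real.rpow_natCast,
    ← Real.rpow_mul hp.le, ← Real.rpow_add hp]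
  rw [show -(d : ℝ) / 2 + 1 / 2 * d = 0 by ring, Real.rpow_zero]

/-- Continuous bounded functions of `(x, v)`, for which `intMu` is an honest integral. -/
def BddCont (d : ℕ) (F : (Fin d → ℝ) → (Fin d → ℝ) → ℝ) : Prop :=
  Continuous (fun p : (Fin d → ℝ) × (Fin d → ℝ) => F p.1 p.2) ∧ ∃ K, ∀ x v, |F x v| ≤ K

/-- Lebesgue measure on `[0,1]^d × ℝ^d`, with respect to which `μ` has density `gauss`. -/
def cubeProd (d : ℕ) : Measure ((Fin d → ℝ) × (Fin d → ℝ)) :=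
  (volume.restrict (cube d)).prod volume

lemma integrable_gauss_snd (d : ℕ) :
    Integrable (fun p : (Fin d → ℝ) × (Fin d → ℝ) => gauss d p.2) (cubeProd d) := by
  have : IsFiniteMeasure ((volume : Measure (Fin d → ℝ)).restrict (cube d)) :=
    isFiniteMeasure_restrict.2 (isCompact_Icc.measure_lt_top).ne
  exact (integrable_gauss d).comp_snd _

lemma BddCont.integrable {d : ℕ} {F : (Fin d → ℝ) → (Fin d → ℝ) → ℝ} (hF : BddCont d F) :
    Integrable (fun p : (Fin d → ℝ) × (Fin d → ℝ) => F p.1 p.2 * gauss d p.2) (cubeProd d) := by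
  obtain ⟨hc, K, hK⟩ := hF
  exact (integrable_gauss_snd d).bdd_mul hc.aestronglyMeasurable
    (Eventually.of_forall fun p => hK p.1 p.2)

lemma BddCont.intMu_eq {d : ℕ} {F : (Fin d → ℝ) → (Fin d → ℝ) → ℝ} (hF : BddCont d F) :
    intMu d F = ∫ p, F p.1 p.2 * gauss d p.2 ∂(cubeProd d) :=
  (integral_prod _ hF.integrable).symm

lemma BddCont.sub {d : ℕ} {F G : (Fin d → ℝ) → (Fin d → ℝ) → ℝ}
    (hF : BddCont d F) (hG : BddCont d G) : BddCont d (fun x v => F x v - G x v) := by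
  obtain ⟨hc, K, hK⟩ := hF
  obtain ⟨hc', K', hK'⟩ := hG
  exact ⟨hc.sub hc', K + K', fun x v => (abs_sub _ _).trans (add_le_add (hK x v) (hK' x v))⟩

lemma BddCont.add {d : ℕ} {F G : (Fin d → ℝ) → (Fin d → ℝ) → ℝ}
    (hF : BddCont d F) (hG : BddCont d G) : BddCont d (fun x v => F x v + G x v) := by
  obtain ⟨hc, K, hK⟩ := hF
  obtain ⟨hc', K', hK'⟩ := hG
  exact ⟨hc.add hc', K + K', fun x v => (abs_add_le _ _).trans (add_le_add (hK x v) (hK' x v))⟩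

lemma BddCont.mul {d : ℕ} {F G : (Fin d → ℝ) → (Fin d → ℝ) → ℝ}
    (hF : BddCont d F) (hG : BddCont d G) : BddCont d (fun x v => F x v * G x v) := by
  obtain ⟨hc, K, hK⟩ := hF
  obtain ⟨hc', K', hK'⟩ := hG
  refine ⟨hc.mul hc', K * K', fun x v => ?_⟩
  rw [abs_mul]
  exact mul_le_mul (hK x v) (hK' x v) (abs_nonneg _) ((abs_nonneg _).trans (hK x v))

lemma BddCont.const {d : ℕ} (a : ℝ) : BddCont d (fun _ _ => a) :=
  ⟨continuous_const, |a|, fun _ _ => le_rfl⟩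

lemma BddCont.sum {d : ℕ} {F : Fin d → (Fin d → ℝ) → (Fin d → ℝ) → ℝ}
    (hF : ∀ i, BddCont d (F i)) : BddCont d (fun x v => ∑ i, F i x v) := by
  choose hc K hK using hF
  exact ⟨continuous_finsetSum _ fun i _ => hc i, ∑ i, K i, fun x v =>
    (Finset.abs_sum_le_sum_abs _ _).trans (Finset.sum_le_sum fun i _ => hK i x v)⟩

lemma BddCont.div {d : ℕ} {F G : (Fin d → ℝ) → (Fin d → ℝ) → ℝ} {c : ℝ} (hc0 : 0 < c)
    (hF : BddCont d F) (hG : BddCont d G) (hGc : ∀ x v, c ≤ G x v) :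
    BddCont d (fun x v => F x v / G x v) := by
  obtain ⟨hc, K, hK⟩ := hF
  have hpos : ∀ x v, 0 < G x v := fun x v => hc0.trans_le (hGc x v)
  refine ⟨hc.div hG.1 fun p => (hpos _ _).ne', K / c, fun x v => ?_⟩
  rw [abs_div, abs_of_pos (hpos x v)]
  exact div_le_div₀ ((abs_nonneg _).trans (hK x v)) (hK x v) hc0 (hGc x v)

lemma intMu_sub {d : ℕ} {F G : (Fin d → ℝ) → (Fin d → ℝ) → ℝ}
    (hF : BddCont d F) (hG : BddCont d G) :
    intMu d (fun x v => F x v - G x v) = intMu d F - intMu d G := by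
  rw [(hF.sub hG).intMu_eq, hF.intMu_eq, hG.intMu_eq, ← integral_sub hF.integrable hG.integrable]
  simp_rw [sub_mul]

lemma intMu_const_mul (d : ℕ) (a : ℝ) (F : (Fin d → ℝ) → (Fin d → ℝ) → ℝ) :
    intMu d (fun x v => a * F x v) = a * intMu d F := by
  unfold intMu
  simp_rw [mul_assoc, integral_const_mul]

/-- Functions of `x` alone: the Gaussian factor integrates out. -/
lemma intMu_fst (d : ℕ) (g : (Fin d → ℝ) → ℝ) :
    intMu d (fun x _ => g x) = ∫ x in cube d, g x := by
  unfold intMu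
  simp_rw [integral_const_mul, integral_gauss, mul_one]

lemma hasDerivAt_intMu {d : ℕ} {F F' : ℝ → (Fin d → ℝ) → (Fin d → ℝ) → ℝ} {K : ℝ} (t : ℝ)
    (hF : ∀ s, BddCont d (F s)) (hF' : BddCont d (F' t))
    (hK : ∀ s x v, |F' s x v| ≤ K)
    (hd : ∀ s x v, HasDerivAt (fun r => F r x v) (F' s x v) s) :
    HasDerivAt (fun s => intMu d (F s)) (intMu d (F' t)) t := by
  have e : (fun s => intMu d (F s)) =
      fun s => ∫ p, F s p.1 p.2 * gauss d p.2 ∂(cubeProd d) :=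
    funext fun s => (hF s).intMu_eq
  rw [e, hF'.intMu_eq]
  refine (hasDerivAt_integral_of_dominated_loc_of_deriv_le
    (F := fun s (p : (Fin d → ℝ) × (Fin d → ℝ)) => F s p.1 p.2 * gauss d p.2)
    (F' := fun s (p : (Fin d → ℝ) × (Fin d → ℝ)) => F' s p.1 p.2 * gauss d p.2)
    (bound := fun p => K * gauss d p.2) (Filter.univ_mem)
    (Eventually.of_forall fun s => (hF s).integrable.aestronglyMeasurable)
    (hF t).integrable hF'.integrable.aestronglyMeasurable
    (Eventually.of_forall fun p s _ => ?_) ((integrable_gauss_snd d).const_mul K)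
    (Eventually.of_forall fun p s _ => (hd s p.1 p.2).mul_const _)).2
  rw [Real.norm_eq_abs, abs_mul, abs_of_nonneg (gauss_nonneg d p.2)]
  exact mul_le_mul_of_nonneg_right (hK s p.1 p.2) (gauss_nonneg d p.2)

lemma le_proj {d : ℕ} {f : (Fin d → ℝ) → (Fin d → ℝ) → ℝ} (hf : BddCont d f) {c : ℝ}
    (hc : ∀ x v, c ≤ f x v) (x : Fin d → ℝ) : c ≤ proj d f x := by
  obtain ⟨hcont, K, hK⟩ := hf
  have hm : Continuous (f x) := hcont.comp (by fun_prop : Continuous fun v => (x, v))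
  have hi : Integrable (fun v => f x v * gauss d v) :=
    (integrable_gauss d).bdd_mul hm.aestronglyMeasurable (Eventually.of_forall fun v => hK x v)
  calc c = ∫ v, c * gauss d v := by rw [integral_const_mul, integral_gauss, mul_one]
    _ ≤ proj d f x := integral_mono ((integrable_gauss d).const_mul c) hi
        fun v => mul_le_mul_of_nonneg_right (hc x v) (gauss_nonneg d v)

/-! ### Derivatives of a regular function -/

/-- The phase-space-time `ℝ × ℝ^d × ℝ^d` of points `(t, x, v)`. -/
abbrev TXV (d : ℕ) : Type := ℝ × (Fin d → ℝ) × (Fin d → ℝ)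

/-- Unit vector in the time direction. -/
def eT (d : ℕ) : TXV d := (1, 0, 0)

/-- Unit vector in the direction of the coordinate `x i`. -/
def eX (d : ℕ) (i : Fin d) : TXV d := (0, Pi.single i 1, 0)

lemma hasDerivAt_time {d : ℕ} {f : TXV d → ℝ} {t : ℝ} {x v : Fin d → ℝ}
    (hf : DifferentiableAt ℝ f (t, x, v)) :
    HasDerivAt (fun s => f (s, x, v)) (fderiv ℝ f (t, x, v) (eT d)) t :=
  hf.hasFDerivAt.comp_hasDerivAt t
    ((hasDerivAt_id t).prodMk ((hasDerivAt_const t x).prodMk (hasDerivAt_const t v)))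

lemma hasFDerivAt_space {d : ℕ} {f : TXV d → ℝ} {t : ℝ} {x v : Fin d → ℝ}
    (hf : DifferentiableAt ℝ f (t, x, v)) :
    HasFDerivAt (fun y => f (t, y, v)) ((fderiv ℝ f (t, x, v)).comp
      (ContinuousLinearMap.prod 0 (ContinuousLinearMap.prod (.id ℝ _) 0))) x :=
  hf.hasFDerivAt.comp x
    ((hasFDerivAt_const t x).prodMk ((hasFDerivAt_id x).prodMk (hasFDerivAt_const v x)))

lemma fderiv_space {d : ℕ} {f : TXV d → ℝ} {t : ℝ} {x v : Fin d → ℝ}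
    (hf : DifferentiableAt ℝ f (t, x, v)) (i : Fin d) :
    fderiv ℝ (fun y => f (t, y, v)) x (Pi.single i 1) = fderiv ℝ f (t, x, v) (eX d i) := by
  rw [(hasFDerivAt_space hf).fderiv]
  simp [eX]

lemma fderiv_apply_swap {d : ℕ} {f : TXV d → ℝ} (hf : ContDiff ℝ (⊤ : ℕ∞) f) (q a b : TXV d) :
    fderiv ℝ (fun r => fderiv ℝ f r a) q b = fderiv ℝ (fderiv ℝ f) q b a := by
  have h2 : DifferentiableAt ℝ (fderiv ℝ f) q :=
    (hf.fderiv_right (m := (⊤ : ℕ∞)) (by simp)).differentiable (by simp) q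
  rw [fderiv_clm_apply h2 (differentiableAt_const a)]
  simp

lemma sndFDeriv_symm {d : ℕ} {f : TXV d → ℝ} (hf : ContDiff ℝ (⊤ : ℕ∞) f) (q a b : TXV d) :
    fderiv ℝ (fderiv ℝ f) q a b = fderiv ℝ (fderiv ℝ f) q b a :=
  (hf.contDiffAt.isSymmSndFDerivAt (by
    rw [minSmoothness_of_isRCLikeNormedField]
    exact WithTop.coe_le_coe.2 (le_top : (2 : ℕ∞) ≤ ⊤))) a b

/-! ### The evolution identity -/

/-- The pointwise identity behind the theorem, with `y = h`, `g = ∇h`, `P = Πh`, `p = ∇(Πh)`.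
The left side is the integrand of `I^{ΠX/X}`; the last term on the right is `-λ⁻¹ ∂ₜ(|∇h|²/h)` after the equation
for `∂ₜh` has been inserted. -/
lemma pointwise_identity {ι : Type*} (s : Finset ι) (g p : ι → ℝ) {P y lam : ℝ}
    (hP : P ≠ 0) (hy : y ≠ 0) (hlam : lam ≠ 0) :
    (∑ i ∈ s, ((p i * y - P * g i) / y ^ 2) ^ 2) / (P / y) * y
      = (∑ i ∈ s, p i ^ 2) / P - (∑ i ∈ s, g i ^ 2) / y
        - lam⁻¹ * ((∑ i ∈ s, 2 * (g i * (lam * (p i - g i)))) / y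
          - (∑ i ∈ s, g i ^ 2) * (lam * (P - y)) / (y * y)) := by
  simp only [Finset.sum_div, Finset.sum_mul, Finset.mul_sum, ← Finset.sum_sub_distrib]
  refine Finset.sum_congr rfl fun i _ => ?_
  field_simp
  ring

/-- Evolution of the spatial Fisher information under the relaxation collision
operator: `(d/dt) I^X(h_t) ≤ -λ I^{ΠX/X}(h_t) - λ (I^X(h_t) - I^{ΠX}(h_t))`. -/
theorem spatial_fisher_collision
    (d : ℕ) (hd : 1 ≤ d) (lam : ℝ) (hlam : 0 < lam)
    (h : ℝ → (Fin d → ℝ) → (Fin d → ℝ) → ℝ)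
    (hreg : Regular d h)
    (hpde : SolvesCollision d lam h) :
    ∀ t : ℝ, 0 ≤ t →
      ∃ c : ℝ, HasDerivAt (fun s => IX d (h s)) c t ∧
        c ≤ -lam * IPiXX d (h t) - lam * (IX d (h t) - IPiX d (h t)) := by
  intro t ht
  obtain ⟨hsm, -, ⟨c, C, hc, hcC⟩, hbd⟩ := hreg
  set H : TXV d → ℝ := fun q => h q.1 q.2.1 q.2.2 with hH
  obtain ⟨C1, hC1⟩ := hbd 1
  obtain ⟨C2, hC2⟩ := hbd 2
  replace hC1 : ∀ q, ‖fderiv ℝ H q‖ ≤ C1 := fun q => by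
    rw [← norm_iteratedFDeriv_one]
    exact hC1 q
  replace hC2 : ∀ q, ‖fderiv ℝ (fderiv ℝ H) q‖ ≤ C2 := fun q => by
    rw [← norm_iteratedFDeriv_one, norm_iteratedFDeriv_fderiv]
    exact hC2 q
  have hH1 : ContDiff ℝ (⊤ : ℕ∞) (fderiv ℝ H) := hsm.fderiv_right (by simp)
  have hH2 : ContDiff ℝ (⊤ : ℕ∞) (fderiv ℝ (fderiv ℝ H)) := hH1.fderiv_right (by simp)
  have htop : ((⊤ : ℕ∞) : WithTop ℕ∞) ≠ 0 := by simp
  have hHd : Differentiable ℝ H := hsm.differentiable htop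
  have hGd : ∀ a, Differentiable ℝ (fun q => fderiv ℝ H q a) := fun a =>
    (hH1.differentiable htop).clm_apply (differentiable_const a)
  -- `T = ∂ₜh`, `G i = ∂_{x_i} h`, `D i = ∂ₜ ∂_{x_i} h`
  set T : TXV d → ℝ := fun q => fderiv ℝ H q (eT d) with hT
  set G : Fin d → TXV d → ℝ := fun i q => fderiv ℝ H q (eX d i) with hG
  set D : Fin d → TXV d → ℝ := fun i q => fderiv ℝ (fderiv ℝ H) q (eT d) (eX d i) with hD
  have hTB : ∀ q, |T q| ≤ C1 * ‖eT d‖ := fun q =>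
    (ContinuousLinearMap.le_opNorm _ _).trans
      (mul_le_mul_of_nonneg_right (hC1 q) (norm_nonneg _))
  have hGB : ∀ i q, |G i q| ≤ C1 * ‖eX d i‖ := fun i q =>
    (ContinuousLinearMap.le_opNorm _ _).trans
      (mul_le_mul_of_nonneg_right (hC1 q) (norm_nonneg _))
  have hDB : ∀ i q, |D i q| ≤ C2 * ‖eT d‖ * ‖eX d i‖ := fun i q =>
    ((fderiv ℝ (fderiv ℝ H) q).le_opNorm₂ (eT d) (eX d i)).trans (by gcongr; exact hC2 q)
  have hTc : Continuous T := hH1.continuous.clm_apply continuous_const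
  have hGc : ∀ i, Continuous (G i) := fun i => hH1.continuous.clm_apply continuous_const
  have hDc : ∀ i, Continuous (D i) := fun i =>
    (hH2.continuous.clm_apply continuous_const).clm_apply continuous_const
  have hs : ∀ s : ℝ, Continuous (fun p : (Fin d → ℝ) × (Fin d → ℝ) => ((s, p.1, p.2) : TXV d)) :=
    fun s => by fun_prop
  have bT : ∀ s, BddCont d (fun x v => T (s, x, v)) := fun s =>
    ⟨hTc.comp (hs s), _, fun x v => hTB _⟩
  have bG : ∀ i s, BddCont d (fun x v => G i (s, x, v)) := fun i s =>
    ⟨(hGc i).comp (hs s), _, fun x v => hGB i _⟩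
  have bD : ∀ i s, BddCont d (fun x v => D i (s, x, v)) := fun i s =>
    ⟨(hDc i).comp (hs s), _, fun x v => hDB i _⟩
  have bh : ∀ s, BddCont d (h s) := fun s =>
    ⟨hsm.continuous.comp (hs s), C, fun x v => by
      rw [abs_of_pos (hc.trans_le (hcC s x v).1)]
      exact (hcC s x v).2⟩
  have hpos : ∀ s x v, 0 < h s x v := fun s x v => hc.trans_le (hcC s x v).1
  have hgrad : ∀ s x v i, gradx d (h s) x v i = G i (s, x, v) := fun s x v i =>
    fderiv_space (f := H) (hHd _) i
  -- time derivative of `|∇h|²/h`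
  set F' : ℝ → (Fin d → ℝ) → (Fin d → ℝ) → ℝ := fun s x v =>
    (∑ i, 2 * (G i (s, x, v) * D i (s, x, v))) / h s x v
      - (∑ i, G i (s, x, v) ^ 2) * T (s, x, v) / (h s x v * h s x v) with hF'
  have bsq : ∀ s, BddCont d (fun x v => ∑ i, G i (s, x, v) ^ 2) := fun s => by
    simp_rw [pow_two]
    exact BddCont.sum fun i => (bG i s).mul (bG i s)
  have bF : ∀ s, BddCont d (fun x v => nsq d (gradx d (h s) x v) / h s x v) := fun s => by
    simp only [nsq, hgrad]
    exact (bsq s).div hc (bh s) fun x v => (hcC s x v).1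
  have bF' : BddCont d (F' t) :=
    ((BddCont.sum fun i => (BddCont.const 2).mul ((bG i t).mul (bD i t))).div hc (bh t)
      fun x v => (hcC t x v).1).sub
    (((bsq t).mul (bT t)).div (mul_pos hc hc) ((bh t).mul (bh t)) fun x v =>
      mul_le_mul (hcC t x v).1 (hcC t x v).1 hc.le (hpos t x v).le)
  have hF'B : ∀ s x v, |F' s x v| ≤
      (∑ i, 2 * ((C1 * ‖eX d i‖) * (C2 * ‖eT d‖ * ‖eX d i‖))) / c
      + (∑ i, (C1 * ‖eX d i‖) ^ 2) * (C1 * ‖eT d‖) / (c * c) := by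
    intro s x v
    refine (abs_sub _ _).trans (add_le_add ?_ ?_)
    · rw [abs_div, abs_of_pos (hpos s x v)]
      have hb : |∑ i, 2 * (G i (s, x, v) * D i (s, x, v))| ≤
          ∑ i, 2 * ((C1 * ‖eX d i‖) * (C2 * ‖eT d‖ * ‖eX d i‖)) := by
        refine (Finset.abs_sum_le_sum_abs _ _).trans (Finset.sum_le_sum fun i _ => ?_)
        rw [abs_mul, abs_mul, abs_of_pos (two_pos : (0 : ℝ) < 2)]
        exact mul_le_mul_of_nonneg_left (mul_le_mul (hGB i _) (hDB i _) (abs_nonneg _)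
          ((abs_nonneg _).trans (hGB i (s, x, v)))) two_pos.le
      exact div_le_div₀ ((abs_nonneg _).trans hb) hb hc (hcC s x v).1
    · rw [abs_div, abs_mul, abs_of_pos (mul_pos (hpos s x v) (hpos s x v))]
      have hb : |∑ i, G i (s, x, v) ^ 2| ≤ ∑ i, (C1 * ‖eX d i‖) ^ 2 := by
        refine (Finset.abs_sum_le_sum_abs _ _).trans (Finset.sum_le_sum fun i _ => ?_)
        rw [abs_pow]
        exact pow_le_pow_left₀ (abs_nonneg _) (hGB i _) 2
      have hb' := mul_le_mul hb (hTB (s, x, v)) (abs_nonneg _) ((abs_nonneg _).trans hb)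
      exact div_le_div₀ ((mul_nonneg (abs_nonneg _) (abs_nonneg _)).trans hb') hb' (mul_pos hc hc)
        (mul_le_mul (hcC s x v).1 (hcC s x v).1 hc.le (hpos s x v).le)
  have hTder : ∀ s x v, HasDerivAt (fun r => h r x v) (T (s, x, v)) s := fun s x v =>
    hasDerivAt_time (f := H) (hHd _)
  have hGder : ∀ i s x v, HasDerivAt (fun r => G i (r, x, v)) (D i (s, x, v)) s :=
    fun i s x v => by
      have := hasDerivAt_time (f := G i) (hGd (eX d i) (s, x, v))
      rwa [hG, fderiv_apply_swap hsm] at this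
  have hder : ∀ s x v, HasDerivAt (fun r => nsq d (gradx d (h r) x v) / h r x v) (F' s x v) s := by
    intro s x v
    simp only [nsq, hgrad]
    have h1 : HasDerivAt (fun r => ∑ i, G i (r, x, v) ^ 2)
        (∑ i, 2 * (G i (s, x, v) * D i (s, x, v))) s := by
      refine HasDerivAt.fun_sum fun i _ => ?_
      refine ((hGder i s x v).fun_pow 2).congr_deriv ?_
      norm_num
      ring
    refine (h1.fun_div (hTder s x v) (hpos s x v).ne').congr_deriv ?_
    have := (hpos s x v).ne'
    simp only [hF']
    field_simp
  refine ⟨intMu d (F' t), hasDerivAt_intMu t bF bF' hF'B hder, le_of_eq ?_⟩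
  -- The equation expresses `Πh` through `h` and `∂ₜh`; this gives its spatial regularity.
  have hTeq : ∀ x v, T (t, x, v) = lam * (proj d (h t) x - h t x v) := fun x v => by
    rw [← hpde t x v ht, (hTder t x v).deriv]
  have hPeq : ∀ v, proj d (h t) = fun x => H (t, x, v) + lam⁻¹ * T (t, x, v) := fun v => by
    funext x
    rw [hTeq x v]
    field_simp
    simp [hH]
  have hTd : Differentiable ℝ T := hGd (eT d)
  have hPd : Differentiable ℝ (proj d (h t)) := fun x => by
    rw [hPeq 0]
    exact (hasFDerivAt_space (hHd _)).differentiableAt.add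
      ((hasFDerivAt_space (hTd _)).differentiableAt.const_mul _)
  have hPgrad : ∀ x v i,
      grad1 d (proj d (h t)) x i = G i (t, x, v) + lam⁻¹ * D i (t, x, v) := by
    intro x v i
    have h1 := (hasFDerivAt_space (f := H) (t := t) (x := x) (v := v) (hHd _)).differentiableAt
    have h2 := (hasFDerivAt_space (f := T) (t := t) (x := x) (v := v) (hTd _)).differentiableAt
    unfold grad1
    rw [hPeq v, fderiv_fun_add h1 (h2.const_mul _), fderiv_const_mul h2]
    simp only [add_apply, smul_apply, smul_eq_mul]
    rw [fderiv_space (hHd _), fderiv_space (hTd _), hT, fderiv_apply_swap hsm,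
      sndFDeriv_symm hsm]
  have hDeq : ∀ x v i,
      D i (t, x, v) = lam * (grad1 d (proj d (h t)) x i - G i (t, x, v)) := by
    intro x v i
    rw [hPgrad x v i]
    field_simp
    ring
  have hPc : ∀ x, c ≤ proj d (h t) x := le_proj (bh t) fun x v => (hcC t x v).1
  have bP : BddCont d (fun x _ => proj d (h t) x) := by
    have : BddCont d (fun x v => h t x v + lam⁻¹ * T (t, x, v)) :=
      (bh t).add ((BddCont.const _).mul (bT t))
    convert this using 3 with x v
    exact congrFun (hPeq v) x
  have bgP : ∀ i, BddCont d (fun x _ => grad1 d (proj d (h t)) x i) := fun i => by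
    have : BddCont d (fun x v => G i (t, x, v) + lam⁻¹ * D i (t, x, v)) :=
      (bG i t).add ((BddCont.const _).mul (bD i t))
    convert this using 3 with x v
    exact hPgrad x v i
  have bB : BddCont d (fun x _ => nsq d (grad1 d (proj d (h t)) x) / proj d (h t) x) := by
    simp only [nsq, pow_two]
    exact (BddCont.sum fun i => (bgP i).mul (bgP i)).div hc bP fun x _ => hPc x
  have hquot : ∀ x v i, gradx d (fun y w => proj d (h t) y / h t y w) x v i =
      (grad1 d (proj d (h t)) x i * h t x v - proj d (h t) x * G i (t, x, v)) / h t x v ^ 2 := by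
    intro x v i
    have h1 : DifferentiableAt ℝ (fun y => h t y v) x :=
      (hasFDerivAt_space (f := H) (hHd _)).differentiableAt
    have h2 : fderiv ℝ (fun y => h t y v) x (Pi.single i 1) = G i (t, x, v) := hgrad t x v i
    have h3 := (hPd x).hasFDerivAt.fun_mul
      ((hasDerivAt_inv (hpos t x v).ne').comp_hasFDerivAt x h1.hasFDerivAt)
    have h4 := (hpos t x v).ne'
    unfold gradx
    simp only [div_eq_mul_inv]
    refine (congrArg (fun L => L (Pi.single i 1)) h3.fderiv).trans ?_
    simp only [add_apply, smul_apply, smul_eq_mul, h2, grad1, Function.comp_apply]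
    field_simp
    ring
  have hQ : IPiXX d (h t) = IPiX d (h t) - IX d (h t) - lam⁻¹ * intMu d (F' t) := by
    have e1 : IPiX d (h t) =
        intMu d (fun x _ => nsq d (grad1 d (proj d (h t)) x) / proj d (h t) x) :=
      (intMu_fst d _).symm
    rw [e1, IX, ← intMu_const_mul, ← intMu_sub bB (bF t),
      ← intMu_sub (bB.sub (bF t)) ((BddCont.const lam⁻¹).mul bF'), IPiXX]
    congr 1
    funext x v
    simp only [nsq, hquot, hgrad, hF', hTeq, hDeq]
    exact pointwise_identity _ _ _ (hc.trans_le (hPc x)).ne' (hpos t x v).ne' hlam.ne'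
  rw [hQ]
  field_simp
  ring
end
end

section
/- p-version of the relative Fisher information bound: for every p ∈ (1,2] and every smooth h : 𝕋^d × ℝ^d → (0,∞) bounded above and below by positive constants with bounded gradient, ∫_{𝕋^d × ℝ^d} |∇_x( ((Πh)^{p−1} − h^{p−1})/(p−1) )|² h^{2−p} dμ ≤ ∫_{𝕋^d × ℝ^d} h^{p−2} |∇_x h|² dμ − ∫_{𝕋^d} (Πh)^{p−2} |∇_x Πh|² dx. -/
/-!
Write `G = Πh`. The gradient on the left is `G^{p-2}∇G - h^{p-2}∇ₓh` (`gradx_diff`), so expanding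
the square the integrand is
`G^{2p-4}|∇G|² h^{2-p} - 2 G^{p-2} ∇G·∇ₓh + h^{p-2}|∇ₓh|²`.
At fixed `x`, integrate in `v` against the Gaussian. Since `Π(∇ₓh) = ∇G` (`grad1_proj`), the cross
term gives `-2 G^{p-2}|∇G|²`. Since `0 ≤ 2 - p ≤ 1`, Jensen gives `Π(h^{2-p}) ≤ G^{2-p}`, so the
first term is at most `G^{p-2}|∇G|²`. The sum is `Π(h^{p-2}|∇ₓh|²) - G^{p-2}|∇G|²`
(`fiber_bound`), and integrating over the torus concludes. Jensen is used in pointwise form,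
through the tangent line of the power function at `G` (`rpow_le_tangent`).
-/

open MeasureTheory Real Filter

noncomputable section

/-! ### The Gaussian weight and the projection -/

lemma gauss_pos (d : ℕ) (v : Fin d → ℝ) : 0 < gauss d v := by
  unfold gauss; positivity

lemma continuous_gauss (d : ℕ) : Continuous (gauss d) := by
  unfold gauss; fun_prop

lemma integrable_mul_gauss {d : ℕ} {F : (Fin d → ℝ) → ℝ} {C : ℝ} (hF : Continuous F)
    (hC : ∀ v, |F v| ≤ C) : Integrable fun v => F v * gauss d v :=
  (integrable_gauss d).bdd_mul hF.aestronglyMeasurable (ae_of_all _ hC)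

lemma continuous_proj {d : ℕ} {F : (Fin d → ℝ) → (Fin d → ℝ) → ℝ} {C : ℝ}
    (hF : Continuous fun q : (Fin d → ℝ) × (Fin d → ℝ) => F q.1 q.2)
    (hC : ∀ x v, |F x v| ≤ C) : Continuous (proj d F) := by
  have hg := continuous_gauss d
  refine MeasureTheory.continuous_of_dominated (bound := fun v => C * gauss d v) ?_ ?_
    ((integrable_gauss d).const_mul C) ?_
  · intro x
    have : Continuous fun v => F x v := hF.comp (Continuous.prodMk_right x)
    exact (this.mul hg).aestronglyMeasurable
  · intro x
    refine ae_of_all _ fun v => ?_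
    rw [norm_mul, Real.norm_of_nonneg (gauss_pos d v).le]
    exact mul_le_mul_of_nonneg_right (hC x v) (gauss_pos d v).le
  · refine ae_of_all _ fun v => ?_
    have : Continuous fun x => F x v := hF.comp (Continuous.prodMk_left v)
    exact this.mul continuous_const

/-! ### Jensen's inequality in tangent-line form -/

/-- The tangent line of the concave power `t ↦ t ^ r` at `G` lies above the graph; integrated
in `v`, this is the Jensen inequality `Π(h ^ r) ≤ (Πh) ^ r`. -/
lemma rpow_le_tangent {r G t : ℝ} (hr0 : 0 ≤ r) (hr1 : r ≤ 1) (hG : 0 < G) (ht : 0 < t) :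
    t ^ r ≤ G ^ r + r * G ^ r / G * (t - G) := by
  have h1 : -1 ≤ (t - G) / G := by
    rw [le_div_iff₀ hG]; linarith
  have h2 := rpow_one_add_le_one_add_mul_self h1 hr0 hr1
  have h3 : t = G * (1 + (t - G) / G) := by field_simp; ring
  calc t ^ r = G ^ r * (1 + (t - G) / G) ^ r := by
        conv_lhs => rw [h3]
        exact Real.mul_rpow hG.le (by linarith)
    _ ≤ G ^ r * (1 + r * ((t - G) / G)) := by gcongr
    _ = _ := by field_simp

/-! ### Regularity of `h` and differentiation of `Πh` -/

lemma hasFDerivAt_left {d : ℕ} {h : (Fin d → ℝ) → (Fin d → ℝ) → ℝ} (hreg : RegularStatic d h)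
    (x v : Fin d → ℝ) :
    HasFDerivAt (fun y => h y v)
      ((fderiv ℝ (fun q : (Fin d → ℝ) × (Fin d → ℝ) => h q.1 q.2) (x, v)).comp
        (ContinuousLinearMap.inl ℝ _ _)) x := by
  have h1 := ((hreg.1.differentiable (by simp)) (x, v)).hasFDerivAt
  exact HasFDerivAt.comp (g := fun q : (Fin d → ℝ) × (Fin d → ℝ) => h q.1 q.2)
    (f := fun y => (y, v)) x h1 (hasFDerivAt_prodMk_left x v)

lemma continuous_partial {d : ℕ} {h : (Fin d → ℝ) → (Fin d → ℝ) → ℝ}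
    (hreg : RegularStatic d h) :
    Continuous fun q : (Fin d → ℝ) × (Fin d → ℝ) =>
      (fderiv ℝ (fun q : (Fin d → ℝ) × (Fin d → ℝ) => h q.1 q.2) q).comp
        (ContinuousLinearMap.inl ℝ (Fin d → ℝ) (Fin d → ℝ)) :=
  (hreg.1.continuous_fderiv (by simp)).clm_comp continuous_const

lemma exists_partial_bound {d : ℕ} {h : (Fin d → ℝ) → (Fin d → ℝ) → ℝ}
    (hreg : RegularStatic d h) :
    ∃ C : ℝ, 0 ≤ C ∧ ∀ x v, ‖fderiv ℝ (fun y => h y v) x‖ ≤ C := by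
  obtain ⟨C, hC⟩ := hreg.2.2.2
  have hC0 : 0 ≤ C := (norm_nonneg _).trans (hC 0)
  refine ⟨C, hC0, fun x v => ?_⟩
  rw [(hasFDerivAt_left hreg x v).fderiv]
  refine (ContinuousLinearMap.opNorm_comp_le _ _).trans ?_
  have := ContinuousLinearMap.norm_inl_le_one ℝ (Fin d → ℝ) (Fin d → ℝ)
  calc _ ≤ C * 1 := mul_le_mul (hC _) this (norm_nonneg _) hC0
    _ = C := mul_one C

lemma continuous_gradx {d : ℕ} {h : (Fin d → ℝ) → (Fin d → ℝ) → ℝ}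
    (hreg : RegularStatic d h) (i : Fin d) :
    Continuous fun q : (Fin d → ℝ) × (Fin d → ℝ) => gradx d h q.1 q.2 i := by
  have : (fun q : (Fin d → ℝ) × (Fin d → ℝ) => gradx d h q.1 q.2 i) = fun q =>
      (fderiv ℝ (fun q : (Fin d → ℝ) × (Fin d → ℝ) => h q.1 q.2) q).comp
        (ContinuousLinearMap.inl ℝ (Fin d → ℝ) (Fin d → ℝ)) (Pi.single i 1) := by
    funext q
    simp only [gradx]
    rw [(hasFDerivAt_left hreg q.1 q.2).fderiv]
  rw [this]
  exact (continuous_partial hreg).clm_apply continuous_const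

lemma exists_gradx_bound {d : ℕ} {h : (Fin d → ℝ) → (Fin d → ℝ) → ℝ}
    (hreg : RegularStatic d h) :
    ∃ C : ℝ, 0 ≤ C ∧ ∀ x v i, |gradx d h x v i| ≤ C := by
  obtain ⟨C, hC0, hC⟩ := exists_partial_bound hreg
  refine ⟨C, hC0, fun x v i => ?_⟩
  refine ((fderiv ℝ (fun y => h y v) x).le_opNorm (Pi.single i 1)).trans ?_
  rw [Pi.norm_single, norm_one, mul_one]
  exact hC x v

lemma exists_abs_bound {d : ℕ} {h : (Fin d → ℝ) → (Fin d → ℝ) → ℝ}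
    (hreg : RegularStatic d h) : ∃ C : ℝ, ∀ x v, |h x v| ≤ C := by
  obtain ⟨c, C, hc, hC⟩ := hreg.2.2.1
  exact ⟨C, fun x v => by rw [abs_of_pos (hc.trans_le (hC x v).1)]; exact (hC x v).2⟩

lemma continuous_right {d : ℕ} {F : (Fin d → ℝ) → (Fin d → ℝ) → ℝ}
    (hF : Continuous fun q : (Fin d → ℝ) × (Fin d → ℝ) => F q.1 q.2) (x : Fin d → ℝ) :
    Continuous (F x) := hF.comp (Continuous.prodMk_right x)

lemma hasFDerivAt_proj {d : ℕ} {h : (Fin d → ℝ) → (Fin d → ℝ) → ℝ}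
    (hreg : RegularStatic d h) (x : Fin d → ℝ) :
    Integrable (fun v => gauss d v • fderiv ℝ (fun y => h y v) x) ∧
    HasFDerivAt (proj d h) (∫ v, gauss d v • fderiv ℝ (fun y => h y v) x) x := by
  obtain ⟨C, hC0, hC⟩ := exists_partial_bound hreg
  obtain ⟨C', hC'⟩ := exists_abs_bound hreg
  have hg := continuous_gauss d
  have hmeas : AEStronglyMeasurable (fun v => gauss d v • fderiv ℝ (fun y => h y v) x) := by
    have h1 : (fun v => fderiv ℝ (fun y => h y v) x) = fun v =>
        (fderiv ℝ (fun q : (Fin d → ℝ) × (Fin d → ℝ) => h q.1 q.2) (x, v)).comp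
        (ContinuousLinearMap.inl ℝ (Fin d → ℝ) (Fin d → ℝ)) := by
      funext v; exact (hasFDerivAt_left hreg x v).fderiv
    have h2 : Continuous fun v => fderiv ℝ (fun y => h y v) x := by
      rw [h1]; exact (continuous_partial hreg).comp (Continuous.prodMk_right x)
    exact (hg.smul h2).aestronglyMeasurable
  have hbd : ∀ v y, ‖gauss d v • fderiv ℝ (fun y => h y v) y‖ ≤ C * gauss d v := by
    intro v y
    rw [norm_smul, Real.norm_of_nonneg (gauss_pos d v).le, mul_comm]
    exact mul_le_mul_of_nonneg_right (hC y v) (gauss_pos d v).le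
  have hint := (integrable_gauss d).const_mul C
  refine ⟨hint.mono' hmeas (ae_of_all _ fun v => hbd v x), ?_⟩
  refine hasFDerivAt_integral_of_dominated_of_fderiv_le (bound := fun v => C * gauss d v)
    (F' := fun y v => gauss d v • fderiv ℝ (fun y => h y v) y)
    (s := Set.univ) Filter.univ_mem ?_ ?_ hmeas ?_ hint ?_
  · exact Eventually.of_forall fun y =>
      ((continuous_right hreg.1.continuous y).mul hg).aestronglyMeasurable
  · exact integrable_mul_gauss (continuous_right hreg.1.continuous x) (hC' x)
  · exact ae_of_all _ fun v y _ => hbd v y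
  · refine ae_of_all _ fun v y _ => ?_
    have := (hasFDerivAt_left hreg y v).differentiableAt.hasFDerivAt
    exact this.mul_const (gauss d v)

/-- Differentiation under the integral sign, `∇Πh = Π(∇ₓh)`. -/
lemma grad1_proj {d : ℕ} {h : (Fin d → ℝ) → (Fin d → ℝ) → ℝ}
    (hreg : RegularStatic d h) (x : Fin d → ℝ) (i : Fin d) :
    grad1 d (proj d h) x i = proj d (fun y v => gradx d h y v i) x := by
  obtain ⟨h1, h2⟩ := hasFDerivAt_proj hreg x
  simp only [grad1, proj, gradx]
  rw [h2.fderiv, ContinuousLinearMap.integral_apply h1]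
  refine integral_congr_ae (ae_of_all _ fun v => ?_)
  simp [mul_comm]

lemma proj_pos {d : ℕ} {h : (Fin d → ℝ) → (Fin d → ℝ) → ℝ}
    (hreg : RegularStatic d h) (x : Fin d → ℝ) : 0 < proj d h x := by
  obtain ⟨C', hC'⟩ := exists_abs_bound hreg
  obtain ⟨c, C, hc, hC⟩ := hreg.2.2.1
  have h1 : ∫ v, c * gauss d v ≤ proj d h x := by
    refine integral_mono ((integrable_gauss d).const_mul c)
      (integrable_mul_gauss (continuous_right hreg.1.continuous x) (hC' x)) fun v => ?_
    exact mul_le_mul_of_nonneg_right (hC x v).1 (gauss_pos d v).le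
  rw [integral_const_mul, integral_gauss, mul_one] at h1
  exact hc.trans_le h1

/-- The `x`-gradient of `((Πh)^{p-1} - h^{p-1})/(p-1)`. -/
lemma gradx_diff {d : ℕ} {p : ℝ} (hp1 : 1 < p) {h : (Fin d → ℝ) → (Fin d → ℝ) → ℝ}
    (hpos : ∀ x v, 0 < h x v) (hreg : RegularStatic d h) (x v : Fin d → ℝ) (i : Fin d) :
    gradx d (fun y w => ((proj d h y) ^ (p - 1) - (h y w) ^ (p - 1)) / (p - 1)) x v i
      = proj d h x ^ (p - 2) * grad1 d (proj d h) x i - h x v ^ (p - 2) * gradx d h x v i := by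
  have hp : p - 1 ≠ 0 := by linarith
  have h1 := (hasFDerivAt_proj hreg x).2.differentiableAt.hasFDerivAt.rpow_const
    (p := p - 1) (Or.inl (proj_pos hreg x).ne')
  have h2 := (hasFDerivAt_left hreg x v).differentiableAt.hasFDerivAt.rpow_const
    (p := p - 1) (Or.inl (hpos x v).ne')
  have h3 := (h1.sub h2).mul_const (p - 1)⁻¹
  have h4 : (fun y => ((proj d h y) ^ (p - 1) - (h y v) ^ (p - 1)) / (p - 1))
      = fun y => ((proj d h y) ^ (p - 1) - (h y v) ^ (p - 1)) * (p - 1)⁻¹ := by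
    funext y; rw [div_eq_mul_inv]
  simp only [gradx, grad1]
  rw [h4]
  erw [h3.fderiv]
  simp only [smul_apply, sub_apply, smul_eq_mul]
  rw [show p - 1 - 1 = p - 2 by ring]
  field_simp

/-- Continuity and boundedness of the Fisher density `h^{p-2}|∇ₓh|²`; the lower bound on `h`
enters here since `p - 2 ≤ 0`. -/
lemma fisher_density {d : ℕ} {p : ℝ} (hp2 : p ≤ 2) {h : (Fin d → ℝ) → (Fin d → ℝ) → ℝ}
    (hpos : ∀ x v, 0 < h x v) (hreg : RegularStatic d h) :
    (Continuous fun q : (Fin d → ℝ) × (Fin d → ℝ) =>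
      h q.1 q.2 ^ (p - 2) * nsq d (gradx d h q.1 q.2)) ∧
    ∃ C, ∀ x v, |h x v ^ (p - 2) * nsq d (gradx d h x v)| ≤ C := by
  constructor
  · refine (hreg.1.continuous.rpow_const fun q => Or.inl (hpos _ _).ne').mul ?_
    exact continuous_finsetSum _ fun i _ => (continuous_gradx hreg i).pow 2
  · obtain ⟨C, hC0, hC⟩ := exists_gradx_bound hreg
    obtain ⟨c, C', hc, hC'⟩ := hreg.2.2.1
    refine ⟨c ^ (p - 2) * ∑ _i : Fin d, C ^ 2, fun x v => ?_⟩
    have hn : 0 ≤ nsq d (gradx d h x v) := Finset.sum_nonneg fun i _ => sq_nonneg _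
    rw [abs_of_nonneg (mul_nonneg (Real.rpow_nonneg (hpos x v).le _) hn)]
    refine mul_le_mul (Real.rpow_le_rpow_of_nonpos hc (hC' x v).1 (by linarith)) ?_ hn
      (Real.rpow_nonneg hc.le _)
    exact Finset.sum_le_sum fun i _ => sq_le_sq.2 (by rw [abs_of_nonneg hC0]; exact hC x v i)

/-! ### The inequality at fixed position -/

/-- Expansion of the square: with `s = h^{2-p}`, `t = (Πh)^{2-p}` and `s` below the tangent value
`t + m`, only the term quadratic in `∇Πh` is estimated. -/
lemma square_bound {d : ℕ} {s t m : ℝ} (hs : 0 < s) (ht : 0 < t) (hst : s ≤ t + m)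
    (g a : Fin d → ℝ) :
    nsq d (fun i => t⁻¹ * g i - s⁻¹ * a i) * s
      ≤ t⁻¹ * nsq d g + t⁻¹ ^ 2 * nsq d g * m - 2 * t⁻¹ * dotp d g a + s⁻¹ * nsq d a := by
  have hn : 0 ≤ nsq d g := Finset.sum_nonneg fun i _ => sq_nonneg _
  have h1 : nsq d (fun i => t⁻¹ * g i - s⁻¹ * a i) * s
      = t⁻¹ ^ 2 * nsq d g * s - 2 * t⁻¹ * dotp d g a + s⁻¹ * nsq d a := by
    simp only [nsq, dotp, Finset.sum_mul, Finset.mul_sum, ← Finset.sum_sub_distrib,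
      ← Finset.sum_add_distrib]
    refine Finset.sum_congr rfl fun i _ => ?_
    field_simp
    ring
  have h2 : t⁻¹ ^ 2 * nsq d g * s ≤ t⁻¹ ^ 2 * nsq d g * (t + m) := by gcongr
  have h3 : t⁻¹ ^ 2 * nsq d g * (t + m) = t⁻¹ * nsq d g + t⁻¹ ^ 2 * nsq d g * m := by
    field_simp
  linarith

/-- The bound at a fixed position `x`, before integration over the torus. -/
lemma fiber_bound {d : ℕ} {p : ℝ} (hp1 : 1 < p) (hp2 : p ≤ 2)
    {h : (Fin d → ℝ) → (Fin d → ℝ) → ℝ}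
    (hpos : ∀ x v, 0 < h x v) (hreg : RegularStatic d h) (x : Fin d → ℝ) :
    ∫ v, nsq d (gradx d
            (fun y w => ((proj d h y) ^ (p - 1) - (h y w) ^ (p - 1)) / (p - 1)) x v)
          * h x v ^ (2 - p) * gauss d v
      ≤ proj d (fun y v => h y v ^ (p - 2) * nsq d (gradx d h y v)) x
        - (proj d h x) ^ (p - 2) * nsq d (grad1 d (proj d h) x) := by
  have hG := proj_pos hreg x
  set g := grad1 d (proj d h) x with hg
  obtain ⟨C, hC⟩ := exists_abs_bound hreg
  obtain ⟨C₁, -, hC₁⟩ := exists_gradx_bound hreg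
  obtain ⟨hFc, C₂, hC₂⟩ := fisher_density hp2 hpos hreg
  have i0 := integrable_gauss d
  have i1 : Integrable fun v => h x v * gauss d v :=
    integrable_mul_gauss (continuous_right hreg.1.continuous x) (hC x)
  have i2 : ∀ i, Integrable fun v => gradx d h x v i * gauss d v := fun i =>
    integrable_mul_gauss
      (continuous_right (F := fun x v => gradx d h x v i) (continuous_gradx hreg i) x)
      fun v => hC₁ x v i
  have i3 : Integrable fun v => h x v ^ (p - 2) * nsq d (gradx d h x v) * gauss d v :=
    integrable_mul_gauss
      (continuous_right (F := fun x v => h x v ^ (p - 2) * nsq d (gradx d h x v)) hFc x) (hC₂ x)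
  set G := proj d h x with hGdef
  set t := G ^ (2 - p) with ht
  have ht0 : 0 < t := Real.rpow_pos_of_pos hG _
  have hti : G ^ (p - 2) = t⁻¹ := by
    rw [ht, ← Real.rpow_neg hG.le, neg_sub]
  set r := (2 - p) * t / G with hr
  -- Affine in `h` and `∇ₓh` apart from the Fisher density, so its `v`-integral is explicit.
  let R : (Fin d → ℝ) → ℝ := fun v =>
    (t⁻¹ * nsq d g - t⁻¹ ^ 2 * nsq d g * r * G) * gauss d v
      + t⁻¹ ^ 2 * nsq d g * r * (h x v * gauss d v)
      - 2 * t⁻¹ * ∑ i, g i * (gradx d h x v i * gauss d v)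
      + h x v ^ (p - 2) * nsq d (gradx d h x v) * gauss d v
  have j0 := i0.const_mul (t⁻¹ * nsq d g - t⁻¹ ^ 2 * nsq d g * r * G)
  have j1 := i1.const_mul (t⁻¹ ^ 2 * nsq d g * r)
  have k2 : ∀ i ∈ Finset.univ, Integrable fun v => g i * (gradx d h x v i * gauss d v) :=
    fun i _ => (i2 i).const_mul (g i)
  have j2 := (integrable_finsetSum _ k2).const_mul (2 * t⁻¹)
  have j01 : Integrable fun v => (t⁻¹ * nsq d g - t⁻¹ ^ 2 * nsq d g * r * G) * gauss d v
      + t⁻¹ ^ 2 * nsq d g * r * (h x v * gauss d v) := j0.add j1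
  have j012 : Integrable fun v => (t⁻¹ * nsq d g - t⁻¹ ^ 2 * nsq d g * r * G) * gauss d v
      + t⁻¹ ^ 2 * nsq d g * r * (h x v * gauss d v)
      - 2 * t⁻¹ * ∑ i, g i * (gradx d h x v i * gauss d v) := j01.sub j2
  have hR : Integrable R := j012.add i3
  have hRint : ∫ v, R v = proj d (fun y v => h y v ^ (p - 2) * nsq d (gradx d h y v)) x
        - t⁻¹ * nsq d g := by
    simp only [R]
    rw [integral_add j012 i3, integral_sub j01 j2, integral_add j0 j1,
      integral_const_mul, integral_const_mul, integral_const_mul, integral_finsetSum _ k2,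
      integral_gauss]
    simp only [integral_const_mul]
    have e1 : ∀ i, ∫ v, gradx d h x v i * gauss d v = g i := fun i =>
      (grad1_proj hreg x i).symm
    have e2 : ∫ v, h x v * gauss d v = G := rfl
    have e3 : ∑ i, g i * g i = nsq d g := Finset.sum_congr rfl fun i _ => (sq (g i)).symm
    simp only [e1, e2, e3]
    simp only [proj]
    ring
  rw [hti, ← hRint]
  refine integral_mono_of_nonneg (ae_of_all _ fun v => ?_) hR (ae_of_all _ fun v => ?_)
  · have hn : ∀ b, 0 ≤ nsq d b := fun b => Finset.sum_nonneg fun i _ => sq_nonneg _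
    exact mul_nonneg (mul_nonneg (hn _) (Real.rpow_nonneg (hpos x v).le _)) (gauss_pos d v).le
  · have hs0 : 0 < h x v ^ (2 - p) := Real.rpow_pos_of_pos (hpos x v) _
    have hsi : h x v ^ (p - 2) = (h x v ^ (2 - p))⁻¹ := by
      rw [← Real.rpow_neg (hpos x v).le, neg_sub]
    have hst := rpow_le_tangent (r := 2 - p) (by linarith) (by linarith) hG (hpos x v)
    have hgr : gradx d
        (fun y w => ((proj d h y) ^ (p - 1) - (h y w) ^ (p - 1)) / (p - 1)) x v
        = fun i => t⁻¹ * g i - (h x v ^ (2 - p))⁻¹ * gradx d h x v i := by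
      funext i
      rw [gradx_diff hp1 hpos hreg, ← hsi, ← hti]
    have hsq := mul_le_mul_of_nonneg_right
      (square_bound hs0 ht0 hst g (gradx d h x v)) (gauss_pos d v).le
    simp only [hgr, R]
    refine hsq.trans_eq ?_
    rw [hsi]
    have e : ∑ i, g i * (gradx d h x v i * gauss d v)
        = dotp d g (gradx d h x v) * gauss d v := by
      simp only [dotp, Finset.sum_mul, mul_assoc]
    rw [e]
    ring

/-- `p`-version of the relative Fisher information bound:
`∫ |∇_x(((Πh)^{p-1} - h^{p-1})/(p-1))|² h^{2-p} dμ
   ≤ ∫ h^{p-2} |∇_x h|² dμ - ∫_{𝕋^d} (Πh)^{p-2} |∇_x Πh|² dx`. -/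
theorem p_relative_fisher_bound
    (d : ℕ) (hd : 1 ≤ d) (p : ℝ) (hp1 : 1 < p) (hp2 : p ≤ 2)
    (h : (Fin d → ℝ) → (Fin d → ℝ) → ℝ)
    (hpos : ∀ x v, 0 < h x v) (hreg : RegularStatic d h) :
    (intMu d fun x v =>
        nsq d (gradx d
            (fun y w => ((proj d h y) ^ (p - 1) - (h y w) ^ (p - 1)) / (p - 1)) x v)
          * h x v ^ (2 - p))
      ≤ (intMu d fun x v => h x v ^ (p - 2) * nsq d (gradx d h x v))
        - ∫ x in cube d, (proj d h x) ^ (p - 2) * nsq d (grad1 d (proj d h) x) := by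
  have hcpt : IsCompact (cube d) := isCompact_Icc
  obtain ⟨hFc, C₂, hC₂⟩ := fisher_density hp2 hpos hreg
  obtain ⟨C, hC⟩ := exists_abs_bound hreg
  obtain ⟨C₁, -, hC₁⟩ := exists_gradx_bound hreg
  have c1 : Continuous (proj d fun x v => h x v ^ (p - 2) * nsq d (gradx d h x v)) :=
    continuous_proj hFc hC₂
  have c2 : Continuous fun x => (proj d h x) ^ (p - 2) * nsq d (grad1 d (proj d h) x) := by
    refine ((continuous_proj hreg.1.continuous hC).rpow_const
      fun x => Or.inl (proj_pos hreg x).ne').mul ?_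
    refine continuous_finsetSum _ fun i _ => ?_
    simp only [grad1_proj hreg]
    exact (continuous_proj (F := fun x v => gradx d h x v i) (continuous_gradx hreg i)
      fun x v => hC₁ x v i).pow 2
  have k1 := c1.continuousOn.integrableOn_compact (μ := volume) hcpt
  have k2 := c2.continuousOn.integrableOn_compact (μ := volume) hcpt
  have key := integral_mono_of_nonneg (μ := volume.restrict (cube d))
    (ae_of_all _ fun x => ?_) (k1.sub k2) (ae_of_all _ (fiber_bound hp1 hp2 hpos hreg))
  · refine key.trans_eq ?_
    simp only [Pi.sub_apply]
    rw [integral_sub k1 k2]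
    rfl
  · refine integral_nonneg fun v => ?_
    exact mul_nonneg (mul_nonneg (Finset.sum_nonneg fun i _ => sq_nonneg _)
      (Real.rpow_nonneg (hpos x v).le _)) (gauss_pos d v).le

end
end
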